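/- Let α ≥ β ≥ γ ≥ 1 be integers and let G be the group presented by ⟨a,b | a^(2^α) = b^(2^β) = [a,b]^(2^γ) = [a,b,a] = [a,b,b] = e⟩ (coproduct type). Then G is capable if and only if α = β, or α = β + 1 and γ = β. -/

import Mathlib

/-- The paper's commutator convention: `[x,y] = x⁻¹y⁻¹xy`. -/
def pcomm {G : Type*} [Group G] (x y : G) : G := x⁻¹ * y⁻¹ * x * y

/-- A group is capable if it is isomorphic to `K/Z(K)` for some group `K`. -/
def IsCapable (G : Type*) [Group G] : Prop :=
  ∃ (K : Type) (_ : Group K), Nonempty ((K ⧸ Subgroup.center K) ≃* G)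

/-- Relators of the type (i) (coproduct type) presentation
`⟨a,b | a^(2^α) = b^(2^β) = [a,b]^(2^γ) = [a,b,a] = [a,b,b] = e⟩`. -/
def relsI (α β γ : ℕ) : Set (FreeGroup (Fin 2)) :=
  let a : FreeGroup (Fin 2) := FreeGroup.of 0
  let b : FreeGroup (Fin 2) := FreeGroup.of 1
  {a ^ 2 ^ α, b ^ 2 ^ β, pcomm a b ^ 2 ^ γ,
    pcomm (pcomm a b) a, pcomm (pcomm a b) b}

/-!
Necessity: if `G ≃ K / Z(K)`, lift `a, b` to `x, y ∈ K`. Triple commutators of `x, y` are central,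
so `[x ^ N, y] = [x, y] ^ N * [x, y, x] ^ (N.choose 2)`. They are killed by the order `n` of
`[a, b]`, and centrality of `y ^ m`, for `m` the order of `b`, makes `[x, y] ^ m` a power of
`[y, x, y]` with exponent `m.choose 2`. Hence `x ^ m` is central if `2 * n ∣ m`, while only
`x ^ (2 * m)` need be central if `n = m`; this bounds the order of `a`.

Sufficiency: over a ring with an element `T` such that `T ^ 3 = 0`, let `x` be multiplication by
`1 + T` and `y` the map `v ↦ V * v + 1`, with `V = 1` or `V = 1 + T`. The group generated by these
affine permutations, modulo its center, is `G` once the additive relations between `T` and `T ^ 2`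
are chosen suitably.
-/

section Choose

theorem succ_choose_two (n : ℕ) : (n + 1).choose 2 = n + n.choose 2 := by
  rw [Nat.choose_succ_succ' n 1, Nat.choose_one_right]

theorem two_mul_choose_two_add_self (n : ℕ) : 2 * n.choose 2 + n = n ^ 2 := by
  induction n with
  | zero => rfl
  | succ n ih => rw [succ_choose_two]; linarith

theorem dvd_choose_two_mul_two (n : ℕ) : n ∣ n.choose 2 * 2 := by
  rw [mul_comm, Nat.dvd_add_iff_left dvd_rfl, two_mul_choose_two_add_self]
  exact dvd_pow_self n two_ne_zero

theorem dvd_choose_two_of_two_mul_dvd {m n : ℕ} (h : 2 * m ∣ n) : m ∣ n.choose 2 := by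
  have hdouble : 2 * m ∣ 2 * n.choose 2 :=
    h.trans (mul_comm 2 (n.choose 2) ▸ dvd_choose_two_mul_two n)
  exact Nat.dvd_of_mul_dvd_mul_left two_pos hdouble

theorem two_mul_dvd_of_dvd_choose_two {m n : ℕ} (hm : Even m) (hn : m ∣ n)
    (h : m ∣ n.choose 2) : 2 * m ∣ n := by
  have hsq : 2 * m ∣ n ^ 2 := by
    rw [sq]
    exact mul_dvd_mul (hm.two_dvd.trans hn) hn
  rw [← two_mul_choose_two_add_self] at hsq
  exact (Nat.dvd_add_right (mul_dvd_mul_left 2 h)).1 hsq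

end Choose

section Pcomm

variable {G H : Type*} [Group G] [Group H]

theorem mul_eq_mul_pcomm (x y : G) : x * y = y * x * pcomm x y := by
  unfold pcomm; group

theorem pcomm_eq_iff {x y c : G} : pcomm x y = c ↔ x * y = y * x * c := by
  rw [mul_eq_mul_pcomm, mul_right_inj]

theorem pcomm_eq_one_iff {x y : G} : pcomm x y = 1 ↔ Commute x y := by
  rw [pcomm_eq_iff, mul_one, commute_iff_eq]

theorem inv_pcomm (x y : G) : (pcomm x y)⁻¹ = pcomm y x := by
  unfold pcomm; group

theorem map_pcomm (f : G →* H) (x y : G) : f (pcomm x y) = pcomm (f x) (f y) := by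
  simp only [pcomm, map_mul, map_inv]

theorem pow_mul_eq_mul_mul_pcomm_pow (x y : G) (n : ℕ) :
    x ^ n * y = y * (x * pcomm x y) ^ n := by
  have h : SemiconjBy y (x * pcomm x y) x := by
    rw [SemiconjBy, ← mul_assoc, ← mul_eq_mul_pcomm]
  exact (h.pow_right n).symm

theorem pcomm_pow_left {x y : G} (h : Commute (pcomm x y) x) (n : ℕ) :
    pcomm (x ^ n) y = pcomm x y ^ n := by
  rw [pcomm_eq_iff, pow_mul_eq_mul_mul_pcomm_pow, h.symm.mul_pow, mul_assoc]

theorem mul_pow_of_commute_pcomm {x c : G} (hx : Commute (pcomm c x) x)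
    (hc : Commute (pcomm c x) c) (n : ℕ) :
    (x * c) ^ n = x ^ n * c ^ n * pcomm c x ^ n.choose 2 := by
  induction n with
  | zero => simp
  | succ n ih =>
    have hswap : c ^ n * x = x * c ^ n * pcomm c x ^ n := by
      rw [← pcomm_pow_left hc, ← mul_eq_mul_pcomm]
    have hxc (k : ℕ) : Commute (pcomm c x ^ k) (x * c) := (hx.mul_right hc).pow_left k
    calc (x * c) ^ (n + 1)
        = x ^ n * c ^ n * (pcomm c x ^ n.choose 2 * (x * c)) := by
          rw [pow_succ, ih, mul_assoc]
      _ = x ^ n * (c ^ n * x) * c * pcomm c x ^ n.choose 2 := by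
          rw [(hxc _).eq]; simp only [mul_assoc]
      _ = x ^ n * x * c ^ n * (pcomm c x ^ n * c) * pcomm c x ^ n.choose 2 := by
          rw [hswap]; simp only [mul_assoc]
      _ = x ^ (n + 1) * c ^ (n + 1) * pcomm c x ^ (n + 1).choose 2 := by
          rw [(hc.pow_left n).eq, succ_choose_two, pow_succ x n, pow_succ c n,
            pow_add (pcomm c x)]
          simp only [mul_assoc]

theorem pcomm_pow_left_of_commute {x y : G} (hx : Commute (pcomm (pcomm x y) x) x)
    (hc : Commute (pcomm (pcomm x y) x) (pcomm x y)) (n : ℕ) :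
    pcomm (x ^ n) y = pcomm x y ^ n * pcomm (pcomm x y) x ^ n.choose 2 := by
  rw [pcomm_eq_iff, pow_mul_eq_mul_mul_pcomm_pow, mul_pow_of_commute_pcomm hx hc]
  simp only [mul_assoc]

open Subgroup in
theorem commute_pow_mul_of_mem_center {x y : G} {m n r : ℕ}
    (hx : pcomm (pcomm x y) x ∈ center G) (hy : pcomm (pcomm y x) y ∈ center G)
    (hc : pcomm x y ^ n ∈ center G) (hym : y ^ m ∈ center G)
    (hr : n ∣ m.choose 2 * r) (hmr : n ∣ (m * r).choose 2) : Commute (x ^ (m * r)) y := by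
  have hcomm {z : G} (hz : z ∈ center G) (g : G) : Commute z g :=
    (mem_center_iff.1 hz g).symm
  have hdvd {g : G} {k : ℕ} (hg : g ^ n = 1) (hk : n ∣ k) : g ^ k = 1 :=
    orderOf_dvd_iff_pow_eq_one.1 ((orderOf_dvd_of_pow_eq_one hg).trans hk)
  have hu : pcomm (pcomm x y) x ^ n = 1 := by
    rw [← pcomm_pow_left (hcomm hx _), pcomm_eq_one_iff]
    exact hcomm hc x
  have hv : pcomm (pcomm y x) y ^ n = 1 := by
    rw [← pcomm_pow_left (hcomm hy _), pcomm_eq_one_iff, ← inv_pcomm, inv_pow]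
    exact (hcomm hc y).inv_left
  have hyx : pcomm y x ^ m * pcomm (pcomm y x) y ^ m.choose 2 = 1 := by
    rw [← pcomm_pow_left_of_commute (hcomm hy _) (hcomm hy _), pcomm_eq_one_iff]
    exact hcomm hym x
  have hmul : pcomm x y ^ (m * r) = 1 := by
    rw [← inv_pcomm, inv_pow, inv_eq_one, pow_mul, eq_inv_of_mul_eq_one_left hyx, inv_pow,
      ← pow_mul, inv_eq_one]
    exact hdvd hv hr
  rw [← pcomm_eq_one_iff, pcomm_pow_left_of_commute (hcomm hx _) (hcomm hx _), hmul,
    hdvd hu hmr, one_mul]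

end Pcomm

section Capable

open Subgroup

theorem IsCapable.exists_surjective_ker_eq_center {G : Type*} [Group G] (h : IsCapable G) :
    ∃ (K : Type) (_ : Group K) (φ : K →* G), Function.Surjective φ ∧ φ.ker = center K := by
  obtain ⟨K, _, ⟨e⟩⟩ := h
  refine ⟨K, inferInstance, (e : K ⧸ center K →* G).comp (QuotientGroup.mk' (center K)),
    e.surjective.comp (QuotientGroup.mk'_surjective _), ?_⟩
  rw [MonoidHom.ker_mulEquiv_comp, QuotientGroup.ker_mk']

theorem centralizer_le_center_of_closure_image_eq_top {K G : Type*} [Group K] [Group G]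
    {φ : K →* G} (hker : φ.ker ≤ center K) {s : Set K} (hs : closure (φ '' s) = ⊤) :
    centralizer s ≤ center K := by
  intro w hw
  have hker' : φ.ker ≤ centralizer {w} := hker.trans (center_le_centralizer _)
  have hsw : closure s ≤ centralizer {w} :=
    (closure_le _).2 fun g hg => mem_centralizer_singleton_iff.2 (hw g hg)
  have htop : centralizer {w} = ⊤ := by
    rw [← comap_map_eq_self hker', eq_top_iff, ← comap_top φ, ← hs, ← MonoidHom.map_closure]
    exact comap_mono (map_mono hsw)
  exact mem_center_iff.2 fun g => mem_centralizer_singleton_iff.1 (htop ▸ mem_top g)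

variable {ι : Type*} {H : Type*} [Group H]

theorem comap_centralizer_range_lift (f : ι → H) :
    (centralizer (Set.range f)).comap (FreeGroup.lift f) =
      ((QuotientGroup.mk' (center (FreeGroup.lift f).range)).comp
        (FreeGroup.lift f).rangeRestrict).ker := by
  ext w
  rw [← MonoidHom.comap_ker, QuotientGroup.ker_mk', mem_comap, mem_comap, mem_center_iff,
    ← centralizer_closure, ← FreeGroup.range_lift_eq_closure, mem_centralizer_iff]
  simp only [Subtype.forall, Subtype.ext_iff, coe_mul, MonoidHom.coe_rangeRestrict,
    SetLike.mem_coe]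

instance normal_comap_centralizer_range_lift (f : ι → H) :
    ((centralizer (Set.range f)).comap (FreeGroup.lift f)).Normal :=
  comap_centralizer_range_lift f ▸ MonoidHom.normal_ker _

theorem isCapable_presentedGroup {H : Type} [Group H] {rels : Set (FreeGroup ι)} (f : ι → H)
    (h : normalClosure rels = (centralizer (Set.range f)).comap (FreeGroup.lift f)) :
    IsCapable (PresentedGroup rels) := by
  have hsurj := (QuotientGroup.mk'_surjective (center (FreeGroup.lift f).range)).comp
    (FreeGroup.lift f).rangeRestrict_surjective
  exact ⟨(FreeGroup.lift f).range, inferInstance,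
    ⟨((QuotientGroup.quotientMulEquivOfEq (h.trans (comap_centralizer_range_lift f))).trans
      (QuotientGroup.quotientKerEquivOfSurjective _ hsurj)).symm⟩⟩

end Capable

section ClassTwoRels

open Subgroup

/-- The relators `a ^ l`, `b ^ m`, `[a, b] ^ n`, `[a, b, a]`, `[a, b, b]`: `relsI` with arbitrary
exponents in place of powers of two. -/
def classTwoRels (l m n : ℕ) : Set (FreeGroup (Fin 2)) :=
  let a : FreeGroup (Fin 2) := FreeGroup.of 0
  let b : FreeGroup (Fin 2) := FreeGroup.of 1
  {a ^ l, b ^ m, pcomm a b ^ n, pcomm (pcomm a b) a, pcomm (pcomm a b) b}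

theorem relsI_eq_classTwoRels (α β γ : ℕ) :
    relsI α β γ = classTwoRels (2 ^ α) (2 ^ β) (2 ^ γ) :=
  rfl

variable {l m n : ℕ}

theorem forall_mem_classTwoRels_iff {G : Type*} [Group G] (φ : FreeGroup (Fin 2) →* G)
    {s : Set G} :
    (∀ r ∈ classTwoRels l m n, φ r ∈ s) ↔
      φ (.of 0) ^ l ∈ s ∧ φ (.of 1) ^ m ∈ s ∧ pcomm (φ (.of 0)) (φ (.of 1)) ^ n ∈ s ∧
        pcomm (pcomm (φ (.of 0)) (φ (.of 1))) (φ (.of 0)) ∈ s ∧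
        pcomm (pcomm (φ (.of 0)) (φ (.of 1))) (φ (.of 1)) ∈ s := by
  simp only [classTwoRels, Set.mem_insert_iff, Set.mem_singleton_iff, forall_eq_or_imp, forall_eq,
    map_pow, map_pcomm]

theorem classTwoRels_relations :
    let a : PresentedGroup (classTwoRels l m n) := .of 0
    let b : PresentedGroup (classTwoRels l m n) := .of 1
    a ^ l = 1 ∧ b ^ m = 1 ∧ pcomm a b ^ n = 1 ∧
      pcomm (pcomm a b) a = 1 ∧ pcomm (pcomm a b) b = 1 :=
  (forall_mem_classTwoRels_iff (PresentedGroup.mk _) (s := {1})).1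
    fun _ => PresentedGroup.one_of_mem

theorem dvd_of_of_zero_pow_eq_one {k : ℕ}
    (h : (.of 0 : PresentedGroup (classTwoRels l m n)) ^ k = 1) : l ∣ k := by
  let f : Fin 2 → Multiplicative (ZMod l) := ![Multiplicative.ofAdd 1, 1]
  have hf : ∀ r ∈ classTwoRels l m n, FreeGroup.lift f r = 1 := by
    apply (forall_mem_classTwoRels_iff (FreeGroup.lift f) (s := {1})).2
    simp [f, pcomm, ← ofAdd_nsmul]
  have hk : Multiplicative.ofAdd (1 : ZMod l) ^ k = 1 := by
    have := congrArg (PresentedGroup.toGroup hf) h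
    rwa [map_pow, PresentedGroup.toGroup.of, map_one] at this
  rwa [← ofAdd_nsmul, ofAdd_eq_one, nsmul_one, ZMod.natCast_eq_zero_iff] at hk

theorem closure_of_zero_of_one (rels : Set (FreeGroup (Fin 2))) :
    Subgroup.closure {PresentedGroup.of 0, PresentedGroup.of 1} =
      (⊤ : Subgroup (PresentedGroup rels)) := by
  rw [← PresentedGroup.closure_range_of]
  congr 1
  ext
  simp [Fin.exists_fin_two, eq_comm]

theorem IsCapable.dvd_mul (h : IsCapable (PresentedGroup (classTwoRels l m n))) {r : ℕ}
    (hr : n ∣ m.choose 2 * r) (hmr : n ∣ (m * r).choose 2) : l ∣ m * r := by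
  obtain ⟨K, _, φ, hsurj, hker⟩ := h.exists_surjective_ker_eq_center
  obtain ⟨x, hx⟩ := hsurj (.of 0)
  obtain ⟨y, hy⟩ := hsurj (.of 1)
  obtain ⟨-, hbm, hcn, hca, hcb⟩ := classTwoRels_relations (l := l) (m := m) (n := n)
  have hcba : pcomm (pcomm (.of 1) (.of 0)) (.of 1) =
      (1 : PresentedGroup (classTwoRels l m n)) := by
    rw [pcomm_eq_one_iff, ← inv_pcomm]
    exact (pcomm_eq_one_iff.1 hcb).inv_left
  have hcomm : Commute (x ^ (m * r)) y := by
    apply commute_pow_mul_of_mem_center (n := n) _ _ _ _ hr hmr <;>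
      simpa only [← hker, MonoidHom.mem_ker, map_pow, map_pcomm, hx, hy]
  have hcentral : x ^ (m * r) ∈ center K := by
    apply centralizer_le_center_of_closure_image_eq_top hker.le (s := {x, y})
    · rw [Set.image_pair, hx, hy, closure_of_zero_of_one]
    · rw [mem_centralizer_iff]
      simp [hcomm.eq, ← pow_succ, ← pow_succ']
  rw [← hker, MonoidHom.mem_ker, map_pow, hx] at hcentral
  exact dvd_of_of_zero_pow_eq_one hcentral

theorem exists_eq_pow_mul_pow_mul_pcomm_pow {G : Type*} [Group G] {a b : G}
    (hgen : closure {a, b} = ⊤) (ha : IsOfFinOrder a) (hb : IsOfFinOrder b)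
    (hca : Commute (pcomm a b) a) (hcb : Commute (pcomm a b) b) (g : G) :
    ∃ i j k : ℕ, g = b ^ j * a ^ i * pcomm a b ^ k := by
  have hg : g ∈ Submonoid.closure {a, b} := by
    rw [← closure_toSubmonoid_of_isOfFinOrder (by simp [ha, hb]), mem_toSubmonoid, hgen]
    exact mem_top g
  induction hg using Submonoid.closure_induction_right with
  | one => exact ⟨0, 0, 0, by simp⟩
  | mul_right g _ s hs ih =>
    obtain ⟨i, j, k, rfl⟩ := ih
    rcases hs with rfl | rfl
    · refine ⟨i + 1, j, k, ?_⟩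
      rw [mul_assoc, (hca.pow_left k).eq, pow_succ]
      simp only [mul_assoc]
    · refine ⟨i, j + 1, i + k, ?_⟩
      have hswap : a ^ i * s = s * a ^ i * pcomm a s ^ i := by
        rw [mul_eq_mul_pcomm, pcomm_pow_left hca]
      rw [mul_assoc, (hcb.pow_left k).eq, ← mul_assoc, mul_assoc (s ^ j), hswap, pow_succ, pow_add]
      simp only [mul_assoc]

theorem exists_eq_of_pow_mul_of_pow_mul_pcomm_pow [NeZero l] [NeZero m]
    (g : PresentedGroup (classTwoRels l m n)) :
    ∃ i j k : ℕ, g = .of 1 ^ j * .of 0 ^ i * pcomm (.of 0) (.of 1) ^ k := by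
  obtain ⟨ha, hb, -, hca, hcb⟩ := classTwoRels_relations (l := l) (m := m) (n := n)
  exact exists_eq_pow_mul_pow_mul_pcomm_pow (closure_of_zero_of_one _)
    (isOfFinOrder_iff_pow_eq_one.2 ⟨l, NeZero.pos l, ha⟩)
    (isOfFinOrder_iff_pow_eq_one.2 ⟨m, NeZero.pos m, hb⟩)
    (pcomm_eq_one_iff.1 hca) (pcomm_eq_one_iff.1 hcb) g

theorem isCapable_classTwoRels_of_mem_centralizer_iff [NeZero l] [NeZero m] {H : Type} [Group H]
    {x y : H}
    (hx : pcomm (pcomm x y) x ∈ centralizer {x, y})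
    (hy : pcomm (pcomm x y) y ∈ centralizer {x, y})
    (h : ∀ i j k : ℕ, y ^ j * x ^ i * pcomm x y ^ k ∈ centralizer {x, y} ↔
      l ∣ i ∧ m ∣ j ∧ n ∣ k) :
    IsCapable (PresentedGroup (classTwoRels l m n)) := by
  let f : Fin 2 → H := ![x, y]
  have hrange : Set.range f = {x, y} := by simp [f, Set.pair_comm]
  have hgen (i j k : ℕ) : FreeGroup.lift f (.of 1 ^ j * .of 0 ^ i * pcomm (.of 0) (.of 1) ^ k) =
      y ^ j * x ^ i * pcomm x y ^ k := by
    simp [f, map_pcomm]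
  have hrels : normalClosure (classTwoRels l m n) ≤
      (centralizer (Set.range f)).comap (FreeGroup.lift f) := by
    apply normalClosure_le_normal
    refine (forall_mem_classTwoRels_iff (FreeGroup.lift f) (s := centralizer (Set.range f))).2 ?_
    simp only [hrange, FreeGroup.lift_apply_of, f, Matrix.cons_val_zero, Matrix.cons_val_one,
      SetLike.mem_coe]
    exact ⟨by simpa using h l 0 0, by simpa using h 0 m 0, by simpa using h 0 0 n, hx, hy⟩
  refine isCapable_presentedGroup f (hrels.antisymm fun w hw => ?_)
  obtain ⟨i, j, k, hijk⟩ := exists_eq_of_pow_mul_of_pow_mul_pcomm_pow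
    (PresentedGroup.mk (classTwoRels l m n) w)
  have hw' : (.of 1 ^ j * .of 0 ^ i * pcomm (.of 0) (.of 1) ^ k) * w⁻¹ ∈
      normalClosure (classTwoRels l m n) := by
    rw [← PresentedGroup.mk_eq_one_iff, map_mul, map_inv, hijk, mul_inv_eq_one]
    simp only [map_mul, map_pow, map_pcomm]
    rfl
  have hnormal := (mul_mem_cancel_right (inv_mem hw)).1 (hrels hw')
  rw [mem_comap, hgen, hrange, h] at hnormal
  obtain ⟨⟨i, rfl⟩, ⟨j, rfl⟩, ⟨k, rfl⟩⟩ := hnormal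
  obtain ⟨ha, hb, hc, -, -⟩ := classTwoRels_relations (l := l) (m := m) (n := n)
  rw [← PresentedGroup.mk_eq_one_iff, hijk, pow_mul, pow_mul, pow_mul, ha, hb, hc]
  simp only [one_pow, mul_one]

end ClassTwoRels

section AffinePerm

variable {R : Type*} [CommRing R]

/-- The affine permutation `v ↦ u * v + w` of a commutative ring. Two such permutations
generate the groups whose central quotients realize the presentations. -/
def affinePerm (u : Rˣ) (w : R) : Equiv.Perm R :=
  u.mulLeft.trans (Equiv.addRight w)

variable {u u' : Rˣ} {w w' : R}

theorem affinePerm_apply (u : Rˣ) (w v : R) : affinePerm u w v = u * v + w :=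
  rfl

theorem affinePerm_mul (u u' : Rˣ) (w w' : R) :
    affinePerm u w * affinePerm u' w' = affinePerm (u * u') (u * w' + w) := by
  ext v
  simp only [Equiv.Perm.mul_apply, affinePerm_apply, Units.val_mul]
  ring

theorem affinePerm_inj : affinePerm u w = affinePerm u' w' ↔ u = u' ∧ w = w' := by
  refine ⟨fun h => ?_, fun ⟨hu, hw⟩ => hu ▸ hw ▸ rfl⟩
  have hw : w = w' := by simpa [affinePerm_apply] using congrArg (· 0) h
  have hu : (u : R) = u' := by simpa [affinePerm_apply, hw] using congrArg (· 1) h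
  exact ⟨Units.ext hu, hw⟩

theorem affinePerm_pow (u : Rˣ) (w : R) (n : ℕ) :
    affinePerm u w ^ n = affinePerm (u ^ n) (w * ∑ s ∈ Finset.range n, (u : R) ^ s) := by
  induction n with
  | zero => ext v; simp [affinePerm_apply]
  | succ n ih =>
    rw [pow_succ, ih, affinePerm_mul, affinePerm_inj, Finset.sum_range_succ,
      Units.val_pow_eq_pow_val]
    exact ⟨(pow_succ u n).symm, by ring⟩

theorem commute_affinePerm_iff :
    Commute (affinePerm u w) (affinePerm u' w') ↔ ((u : R) - 1) * w' = ((u' : R) - 1) * w := by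
  rw [commute_iff_eq, affinePerm_mul, affinePerm_mul, affinePerm_inj,
    and_iff_right (mul_comm u u')]
  constructor <;> intro h <;> linear_combination h

theorem pcomm_affinePerm (u u' : Rˣ) (w w' : R) :
    pcomm (affinePerm u w) (affinePerm u' w') =
      affinePerm 1 (↑(u' * u)⁻¹ * (((u : R) - 1) * w' - ((u' : R) - 1) * w)) := by
  rw [pcomm_eq_iff, affinePerm_mul, affinePerm_mul, affinePerm_mul, affinePerm_inj,
    Units.mul_inv_cancel_left, mul_one]
  exact ⟨mul_comm u u', by ring⟩

theorem affinePerm_mem_centralizer_iff {U V : Rˣ} (hUV : (U : R) - 1 ∣ (V : R) - 1) :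
    affinePerm u w ∈ Subgroup.centralizer {affinePerm U 0, affinePerm V 1} ↔
      u = 1 ∧ ((U : R) - 1) * w = 0 := by
  obtain ⟨t, ht⟩ := hUV
  simp only [Subgroup.mem_centralizer_iff, Set.mem_insert_iff, Set.mem_singleton_iff,
    forall_eq_or_imp, forall_eq, ← commute_iff_eq, commute_affinePerm_iff, mul_zero, mul_one, ht]
  rw [and_comm, ← Units.val_eq_one, ← sub_eq_zero (b := (1 : R))]
  refine and_congr_left fun hw => ?_
  rw [mul_right_comm, hw, zero_mul, eq_comm]

end AffinePerm

section TruncIdeal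

open Polynomial

/-- The ideal of integer polynomials `f` without constant term for which `(f.coeff 1, f.coeff 2)`
lies in `L`. Modulo it, `X ^ 3 = 0` and `L` is the lattice of relations between `X` and `X ^ 2`. -/
def truncIdeal (L : AddSubgroup (ℤ × ℤ)) (hL : ∀ a b, (a, b) ∈ L → (0, a) ∈ L) : Ideal ℤ[X] where
  carrier := {f | f.coeff 0 = 0 ∧ (f.coeff 1, f.coeff 2) ∈ L}
  add_mem' := fun ⟨hf, hf'⟩ ⟨hg, hg'⟩ => by
    simpa [hf, hg] using L.add_mem hf' hg'
  zero_mem' := ⟨coeff_zero 0, L.zero_mem⟩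
  smul_mem' := fun f g ⟨hg, hg'⟩ => by
    have := L.add_mem (L.zsmul_mem hg' (f.coeff 0)) (L.zsmul_mem (hL _ _ hg') (f.coeff 1))
    simpa [coeff_mul, Finset.Nat.antidiagonal_succ, hg] using this

theorem exists_unit_sub_one_relation_iff (L : AddSubgroup (ℤ × ℤ))
    (hL : ∀ a b, (a, b) ∈ L → (0, a) ∈ L) :
    ∃ (R : Type) (_ : CommRing R) (U : Rˣ), ((U : R) - 1) ^ 3 = 0 ∧
      ∀ a b : ℤ, a * ((U : R) - 1) + b * ((U : R) - 1) ^ 2 = 0 ↔ (a, b) ∈ L := by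
  let q := Ideal.Quotient.mk (truncIdeal L hL)
  have hq (f : ℤ[X]) : q f = 0 ↔ f.coeff 0 = 0 ∧ (f.coeff 1, f.coeff 2) ∈ L :=
    Ideal.Quotient.eq_zero_iff_mem
  have hX : q X ^ 3 = 0 := by
    rw [← map_pow, hq]
    simp [coeff_X_pow, ← Prod.zero_eq_mk]
  obtain ⟨U, hU⟩ := (show IsNilpotent (q X) from ⟨3, hX⟩).isUnit_one_add
  refine ⟨ℤ[X] ⧸ truncIdeal L hL, inferInstance, U, ?_, fun a b => ?_⟩
  · rw [hU, add_sub_cancel_left, hX]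
  · rw [hU, add_sub_cancel_left, ← zsmul_eq_mul, ← zsmul_eq_mul, ← map_pow, ← map_zsmul,
      ← map_zsmul, ← map_add, hq]
    simp [coeff_X_pow, coeff_X, -zsmul_eq_mul]

end TruncIdeal

section UnitExpansion

variable {R : Type*} [CommRing R] {U : Rˣ}

theorem units_pow_eq (hU : ((U : R) - 1) ^ 3 = 0) (n : ℕ) :
    (U : R) ^ n = 1 + n * ((U : R) - 1) + n.choose 2 * ((U : R) - 1) ^ 2 := by
  induction n with
  | zero => simp
  | succ n ih =>
    rw [pow_succ, ih, succ_choose_two]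
    push_cast
    linear_combination (n.choose 2 : R) * hU

theorem units_pow_eq_one_iff (hU : ((U : R) - 1) ^ 3 = 0) (n : ℕ) :
    U ^ n = 1 ↔ n * ((U : R) - 1) + n.choose 2 * ((U : R) - 1) ^ 2 = 0 := by
  rw [← Units.val_eq_one, Units.val_pow_eq_pow_val, units_pow_eq hU, add_assoc, add_eq_left]

end UnitExpansion

section Construction

theorem isCapable_classTwoRels_of_units {l m n : ℕ} [NeZero l] [NeZero m] {R : Type} [CommRing R]
    {U V : Rˣ} (hU : ((U : R) - 1) ^ 3 = 0) (hUV : (U : R) - 1 ∣ (V : R) - 1)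
    (h : ∀ i j k : ℕ, (V ^ j * U ^ i = 1 ∧ ((U : R) - 1) * ∑ s ∈ Finset.range j, (V : R) ^ s +
      k * ((U : R) - 1) ^ 2 = 0) ↔ l ∣ i ∧ m ∣ j ∧ n ∣ k) :
    IsCapable (PresentedGroup (classTwoRels l m n)) := by
  have hmem (u : Rˣ) (w : R) := affinePerm_mem_centralizer_iff (u := u) (w := w) hUV
  obtain ⟨t, ht⟩ := hUV
  obtain ⟨T, hT⟩ : ∃ T, (U : R) - 1 = T := ⟨_, rfl⟩
  simp only [hT] at hU ht h hmem
  have hfix : T ^ 2 = ↑(V * U) * T ^ 2 := by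
    rw [Units.val_mul]
    linear_combination -T ^ 2 * V * hT - T ^ 2 * ht - (V + t) * hU
  let d : R := ↑(V * U)⁻¹ * T
  have hTd : T * d = T ^ 2 := by
    rw [mul_left_comm, ← sq, Units.inv_mul_eq_iff_eq_mul, ← hfix]
  have hc : pcomm (affinePerm U 0) (affinePerm V 1) = affinePerm 1 d := by
    rw [pcomm_affinePerm, mul_zero, mul_one, sub_zero, hT]
  apply isCapable_classTwoRels_of_mem_centralizer_iff (x := affinePerm U 0) (y := affinePerm V 1)
  · rw [hc, pcomm_affinePerm, hmem, Units.val_one, hT]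
    exact ⟨rfl, by linear_combination -T * ↑(U * 1)⁻¹ * hTd - ↑(U * 1)⁻¹ * hU⟩
  · rw [hc, pcomm_affinePerm, hmem, Units.val_one, ht]
    exact ⟨rfl, by linear_combination -T * t * ↑(V * 1)⁻¹ * hTd - t * ↑(V * 1)⁻¹ * hU⟩
  · intro i j k
    rw [hc, affinePerm_pow, affinePerm_pow, affinePerm_pow, affinePerm_mul, affinePerm_mul, hmem,
      ← h, one_pow, mul_one]
    refine and_congr_right fun hu => ?_
    rw [hu]
    simp only [Units.val_one, one_mul, one_pow, Finset.sum_const, Finset.card_range, nsmul_one,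
      zero_mul, mul_zero, zero_add, ← hTd]
    constructor <;> intro hz <;> linear_combination hz

variable {m q : ℕ}

theorem isCapable_classTwoRels_two_mul [NeZero m] (hm : Even m) :
    IsCapable (PresentedGroup (classTwoRels (2 * m) m m)) := by
  let L : AddSubgroup (ℤ × ℤ) :=
    (AddSubgroup.zmultiples (m : ℤ)).prod (AddSubgroup.zmultiples (m : ℤ))
  have hL (a b : ℕ) : ((a : ℤ), (b : ℤ)) ∈ L ↔ m ∣ a ∧ m ∣ b := by
    simp only [L, AddSubgroup.mem_prod, Int.mem_zmultiples_iff, Int.natCast_dvd_natCast]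
  obtain ⟨R, _, U, hU, hrel⟩ := exists_unit_sub_one_relation_iff L
    fun a b hab => ⟨zero_mem _, hab.1⟩
  have hrel' (a b : ℕ) := hrel a b
  simp only [Int.cast_natCast, hL] at hrel'
  refine isCapable_classTwoRels_of_units (V := 1) hU (by simp) fun i j k => ?_
  have hi : U ^ i = 1 ↔ 2 * m ∣ i := by
    rw [units_pow_eq_one_iff hU, hrel']
    exact ⟨fun h => two_mul_dvd_of_dvd_choose_two hm h.1 h.2,
      fun h => ⟨(dvd_mul_left m 2).trans h, dvd_choose_two_of_two_mul_dvd h⟩⟩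
  have hjk : ((U : R) - 1) * ∑ s ∈ Finset.range j, ((1 : Rˣ) : R) ^ s + k * ((U : R) - 1) ^ 2 = 0 ↔
      m ∣ j ∧ m ∣ k := by
    rw [← hrel']
    simp [mul_comm]
  rw [one_pow, one_mul, hi, hjk]

theorem isCapable_classTwoRels_self [NeZero m] (hm : Even m) (hq : q ∣ m) :
    IsCapable (PresentedGroup (classTwoRels m m q)) := by
  -- `U ^ i = 1` amounts to `(i, i.choose 2) ∈ L`, and `i + 2 * i.choose 2 = i ^ 2`.
  let L : AddSubgroup (ℤ × ℤ) :=
    ((AddSubgroup.zmultiples (m : ℤ)).prod (AddSubgroup.zmultiples (2 * q : ℤ))).comap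
      ((AddMonoidHom.fst ℤ ℤ).prod (AddMonoidHom.fst ℤ ℤ + 2 • AddMonoidHom.snd ℤ ℤ))
  have hL (a b : ℕ) : ((a : ℤ), (b : ℤ)) ∈ L ↔ m ∣ a ∧ 2 * q ∣ a + 2 * b := by
    simp only [L, AddSubgroup.mem_comap, AddSubgroup.mem_prod, Int.mem_zmultiples_iff,
      AddMonoidHom.prod_apply, AddMonoidHom.add_apply, AddMonoidHom.nsmul_apply,
      AddMonoidHom.coe_fst, AddMonoidHom.coe_snd, nsmul_eq_mul]
    norm_cast
  have hLX (a b : ℤ) (hab : (a, b) ∈ L) : (0, a) ∈ L := by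
    have : (2 * q : ℤ) ∣ 2 * a :=
      mul_dvd_mul_left 2 ((Int.natCast_dvd_natCast.2 hq).trans (Int.mem_zmultiples_iff.1 hab.1))
    simpa [L, AddSubgroup.mem_prod, Int.mem_zmultiples_iff]
  obtain ⟨R, _, U, hU, hrel⟩ := exists_unit_sub_one_relation_iff L hLX
  have hrel' (a b : ℕ) := hrel a b
  simp only [Int.cast_natCast, hL] at hrel'
  have hsq (j : ℕ) (hj : m ∣ j) : 2 * q ∣ j ^ 2 := by
    rw [sq]
    exact mul_dvd_mul (hm.two_dvd.trans hj) (hq.trans hj)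
  refine isCapable_classTwoRels_of_units (V := U) hU dvd_rfl fun i j k => ?_
  have hpow (i : ℕ) : U ^ i = 1 ↔ m ∣ i := by
    rw [units_pow_eq_one_iff hU, hrel', add_comm i, two_mul_choose_two_add_self,
      and_iff_left_of_imp (hsq i)]
  have hjk : ((U : R) - 1) * ∑ s ∈ Finset.range j, (U : R) ^ s + k * ((U : R) - 1) ^ 2 = 0 ↔
      m ∣ j ∧ q ∣ k := by
    rw [mul_geom_sum, units_pow_eq hU, add_assoc, add_sub_cancel_left, add_assoc, ← add_mul,
      ← Nat.cast_add, hrel', mul_add, ← add_assoc, add_comm j, two_mul_choose_two_add_self]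
    exact and_congr_right fun hj =>
      (Nat.dvd_add_right (hsq j hj)).trans (Nat.mul_dvd_mul_iff_left two_pos)
  rw [← pow_add, hpow, hjk]
  exact and_congr_left fun h => Nat.dvd_add_right h.1

end Construction

/-- A coproduct type group `⟨a,b | a^(2^α) = b^(2^β) = [a,b]^(2^γ) = [a,b,a] =
[a,b,b] = e⟩` with `α ≥ β ≥ γ ≥ 1` is capable if and only if `α = β`, or
`α = β + 1` and `γ = β`. -/
theorem coproduct_type_capable_iff (α β γ : ℕ)
    (hγ : 1 ≤ γ) (hγβ : γ ≤ β) (hβα : β ≤ α) :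
    IsCapable (PresentedGroup (relsI α β γ)) ↔
      (α = β ∨ (α = β + 1 ∧ γ = β)) := by
  have hβ : Even (2 ^ β) := even_two.pow_of_ne_zero (by lia)
  rw [relsI_eq_classTwoRels]
  constructor
  · intro h
    rcases hγβ.eq_or_lt with rfl | hlt
    · have hdvd : 2 ^ α ∣ 2 ^ γ * 2 :=
        h.dvd_mul (dvd_choose_two_mul_two _)
          (dvd_choose_two_of_two_mul_dvd (dvd_of_eq (mul_comm _ _)))
      have : α ≤ γ + 1 := (Nat.pow_dvd_pow_iff_le_right').1 (pow_succ 2 γ ▸ hdvd)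
      lia
    · have hchoose : 2 ^ γ ∣ (2 ^ β).choose 2 :=
        dvd_choose_two_of_two_mul_dvd (pow_succ' 2 γ ▸ pow_dvd_pow 2 hlt)
      have hdvd : 2 ^ α ∣ 2 ^ β * 1 := h.dvd_mul (by rwa [mul_one]) (by rwa [mul_one])
      have : α ≤ β := (Nat.pow_dvd_pow_iff_le_right').1 (mul_one (2 ^ β) ▸ hdvd)
      lia
  · rintro (rfl | ⟨rfl, rfl⟩)
    · exact isCapable_classTwoRels_self hβ (pow_dvd_pow 2 hγβ)
    · rw [pow_succ']
      exact isCapable_classTwoRels_two_mul hβ
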